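/- Let z₀, γ₀ ∈ 𝔻 and γ₁, γ₂ ∈ 𝔻. Let f ∈ ℋ satisfy f(z₀) = γ₀, H¹f(z₀) = γ₁ and H²f(z₀) = γ₂. Then there exists f* ∈ 𝒮 such that f(z) = T_{γ₀}(T_{−z₀}(z)·T_{γ₁}(T_{−z₀}(z)·T_{γ₂}(T_{−z₀}(z)·f*(z)))) for all z ∈ 𝔻. -/

import Mathlib

open Complex Metric

/-- `ℋ`: analytic self-maps of the open unit disk. -/
def Hclass (f : ℂ → ℂ) : Prop :=
  DifferentiableOn ℂ f (ball (0 : ℂ) 1) ∧ Set.MapsTo f (ball (0 : ℂ) 1) (ball (0 : ℂ) 1)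

/-- `𝒮`: analytic maps of the open unit disk into the closed unit disk. -/
def Sclass (f : ℂ → ℂ) : Prop :=
  DifferentiableOn ℂ f (ball (0 : ℂ) 1) ∧ Set.MapsTo f (ball (0 : ℂ) 1) (closedBall (0 : ℂ) 1)

/-- The Möbius transformation `T_a(z) = (z + a)/(1 + conj(a) z)`. -/
noncomputable def T (a z : ℂ) : ℂ := (z + a) / (1 + (starRingEnd ℂ) a * z)

/-- The (first-order) hyperbolic derivative `H¹f(z) = (1-|z|²)f'(z)/(1-|f(z)|²)`. -/
noncomputable def H1 (f : ℂ → ℂ) (z : ℂ) : ℂ :=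
  ((1 - ‖z‖ ^ 2 : ℝ) : ℂ) * deriv f z / ((1 - ‖f z‖ ^ 2 : ℝ) : ℂ)

/-- The second Peschl invariant derivative `D₂f(z)`. -/
noncomputable def D2 (f : ℂ → ℂ) (z : ℂ) : ℂ :=
  ((1 - ‖z‖ ^ 2 : ℝ) : ℂ) ^ 2 / ((1 - ‖f z‖ ^ 2 : ℝ) : ℂ) *
    (iteratedDeriv 2 f z - 2 * (starRingEnd ℂ) z * deriv f z / ((1 - ‖z‖ ^ 2 : ℝ) : ℂ) +
      2 * (starRingEnd ℂ) (f z) * (deriv f z) ^ 2 / ((1 - ‖f z‖ ^ 2 : ℝ) : ℂ))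

/-- The second-order hyperbolic derivative `H²f(z) = D₂f(z)/(2(1-|H¹f(z)|²))`. -/
noncomputable def H2 (f : ℂ → ℂ) (z : ℂ) : ℂ :=
  D2 f z / (2 * ((1 - ‖H1 f z‖ ^ 2 : ℝ) : ℂ))

/-!
Conjugating `f` by disk automorphisms that send `z₀` and `f z₀` to `0` and dividing by the variable
produces, by the Schwarz lemma, a map `Δf ∈ 𝒮` with `f = T_{f(z₀)} (T_{-z₀} · Δf)`. The chain rule
gives `Δf(z₀) = H¹f(z₀)`, and comparing second order Taylor coefficients at `z₀` gives
`H¹(Δf)(z₀) = H²f(z₀)`. By the maximum principle `Δf` stays in `ℋ` as long as `Δf(z₀) ∈ 𝔻`, so the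
construction may be applied three times in a row, with successive values `γ₀`, `γ₁`, `γ₂` at `z₀`.
-/

section

open scoped ComplexConjugate Topology

local notation "𝔻" => ball (0 : ℂ) 1

lemma iteratedDeriv_two_mul {𝕜 𝔸 : Type*} [NontriviallyNormedField 𝕜] [NormedRing 𝔸]
    [NormedAlgebra 𝕜 𝔸] {u v : 𝕜 → 𝔸} {x : 𝕜} (hu : ContDiffAt 𝕜 2 u x) (hv : ContDiffAt 𝕜 2 v x) :
    iteratedDeriv 2 (fun z ↦ u z * v z) x =
      u x * iteratedDeriv 2 v x + 2 * deriv u x * deriv v x + iteratedDeriv 2 u x * v x := by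
  rw [iteratedDeriv_fun_mul hu hv]
  simp [Finset.sum_range_succ]

lemma iteratedDeriv_two_sub_mul {𝕜 : Type*} [NontriviallyNormedField 𝕜] {v : 𝕜 → 𝕜} {x : 𝕜}
    (hv : ContDiffAt 𝕜 2 v x) : iteratedDeriv 2 (fun z ↦ (z - x) * v z) x = 2 * deriv v x := by
  rw [iteratedDeriv_two_mul (by fun_prop) hv]
  simp [iteratedDeriv_succ]

lemma iteratedDeriv_two_one_sub_mul_mul_sub {𝕜 : Type*} [NontriviallyNormedField 𝕜] {f : 𝕜 → 𝕜}
    {x : 𝕜} (a : 𝕜) (hf : ContDiffAt 𝕜 2 f x) :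
    iteratedDeriv 2 (fun z ↦ (1 - a * z) * (f z - f x)) x =
      (1 - a * x) * iteratedDeriv 2 f x - 2 * a * deriv f x := by
  rw [iteratedDeriv_two_mul (by fun_prop) (by fun_prop)]
  simp [iteratedDeriv_succ, sub_eq_add_neg]

lemma mapsTo_ball_of_mapsTo_closedBall {E F : Type*} [NormedAddCommGroup E] [NormedSpace ℂ E]
    [NormedAddCommGroup F] [NormedSpace ℂ F] {f : E → F} {U : Set E} {w : E} {R : ℝ}
    (hUo : IsOpen U) (hUc : IsPreconnected U) (hf : DifferentiableOn ℂ f U)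
    (hmaps : Set.MapsTo f U (closedBall 0 R)) (hw : w ∈ U) (hfw : f w ∈ ball 0 R) :
    Set.MapsTo f U (ball 0 R) := by
  intro z hz
  rw [mem_ball_zero_iff] at hfw ⊢
  by_contra! hRz
  have hmax : IsMaxOn (norm ∘ f) U z := fun y hy ↦
    (mem_closedBall_zero_iff.mp (hmaps hy)).trans hRz
  have hnorm : ‖f w‖ = ‖f z‖ := norm_eqOn_of_isPreconnected_of_isMaxOn hUc hUo hf hz hmax hw
  exact (hRz.trans_eq hnorm.symm).not_gt hfw

lemma ofReal_one_sub_norm_sq (a : ℂ) : ((1 - ‖a‖ ^ 2 : ℝ) : ℂ) = 1 - conj a * a := by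
  rw [conj_mul']
  push_cast
  rfl

lemma norm_one_add_conj_mul_sq_sub_norm_add_sq (a z : ℂ) :
    ‖1 + conj a * z‖ ^ 2 - ‖z + a‖ ^ 2 = (1 - ‖a‖ ^ 2) * (1 - ‖z‖ ^ 2) := by
  simp only [← normSq_eq_norm_sq, normSq_apply, add_re, add_im, mul_re, mul_im, conj_re, conj_im,
    one_re, one_im]
  ring

lemma one_sub_norm_sq_pos {a : ℂ} (ha : a ∈ 𝔻) : 0 < 1 - ‖a‖ ^ 2 :=
  sub_pos.mpr <| pow_lt_one₀ (norm_nonneg a) (mem_ball_zero_iff.mp ha) two_ne_zero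

lemma neg_mem_unitBall {a : ℂ} (ha : a ∈ 𝔻) : -a ∈ 𝔻 := by
  simpa using ha

section MoebiusMap

variable {a z : ℂ}

lemma norm_add_lt_norm_one_add_conj_mul (ha : a ∈ 𝔻) (hz : z ∈ 𝔻) :
    ‖z + a‖ < ‖1 + conj a * z‖ := by
  have hpos := mul_pos (one_sub_norm_sq_pos ha) (one_sub_norm_sq_pos hz)
  rw [← norm_one_add_conj_mul_sq_sub_norm_add_sq, sub_pos] at hpos
  exact lt_of_pow_lt_pow_left₀ 2 (norm_nonneg _) hpos

lemma one_add_conj_mul_ne_zero (ha : a ∈ 𝔻) (hz : z ∈ 𝔻) : 1 + conj a * z ≠ 0 :=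
  norm_pos_iff.mp <| (norm_nonneg _).trans_lt (norm_add_lt_norm_one_add_conj_mul ha hz)

lemma one_sub_conj_mul_ne_zero (ha : a ∈ 𝔻) (hz : z ∈ 𝔻) : 1 - conj a * z ≠ 0 := by
  simpa [sub_eq_add_neg] using one_add_conj_mul_ne_zero (neg_mem_unitBall ha) hz

lemma mapsTo_T (ha : a ∈ 𝔻) : Set.MapsTo (T a) 𝔻 𝔻 := by
  intro z hz
  have hlt := norm_add_lt_norm_one_add_conj_mul ha hz
  rw [mem_ball_zero_iff, T, norm_div]
  exact (div_lt_one ((norm_nonneg _).trans_lt hlt)).mpr hlt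

lemma T_zero (a : ℂ) : T a 0 = a := by
  simp [T]

lemma T_neg_self (a : ℂ) : T (-a) a = 0 := by
  simp [T]

lemma T_neg_mul_one_sub_conj_mul (ha : a ∈ 𝔻) (hz : z ∈ 𝔻) :
    T (-a) z * (1 - conj a * z) = z - a := by
  simp only [T, map_neg, neg_mul, ← sub_eq_add_neg]
  exact div_mul_cancel₀ _ (one_sub_conj_mul_ne_zero ha hz)

lemma T_T_neg (ha : a ∈ 𝔻) (hz : z ∈ 𝔻) : T a (T (-a) z) = z := by
  rw [T, div_eq_iff (one_add_conj_mul_ne_zero ha (mapsTo_T (neg_mem_unitBall ha) hz))]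
  linear_combination T_neg_mul_one_sub_conj_mul ha hz

lemma hasDerivAt_T (h : 1 + conj a * z ≠ 0) :
    HasDerivAt (T a) ((1 - conj a * a) / (1 + conj a * z) ^ 2) z := by
  have hnum : HasDerivAt (fun w ↦ w + a) 1 z := (hasDerivAt_id z).add_const a
  have hden : HasDerivAt (fun w ↦ 1 + conj a * w) (conj a) z := by
    simpa using ((hasDerivAt_id z).const_mul (conj a)).const_add 1
  exact (hnum.div hden h).congr_deriv (by ring)

lemma differentiableOn_T (ha : a ∈ 𝔻) : DifferentiableOn ℂ (T a) 𝔻 := fun _ hz ↦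
  (hasDerivAt_T (one_add_conj_mul_ne_zero ha hz)).differentiableAt.differentiableWithinAt

end MoebiusMap

/-- The map `f` conjugated by disk automorphisms so as to send `0` to `0` instead of `z₀` to
`f z₀`. -/
noncomputable def diskNormalization (f : ℂ → ℂ) (z₀ : ℂ) : ℂ → ℂ :=
  T (-f z₀) ∘ f ∘ T z₀

/-- The hyperbolic difference quotient `T_{-f(z₀)}(f z) / T_{-z₀}(z)` of Beardon and Minda, the
analogue of `dslope` for self-maps of the disk; going through `dslope` fills in the removable
singularity at `z = z₀`. -/
noncomputable def hyperbolicDslope (f : ℂ → ℂ) (z₀ : ℂ) : ℂ → ℂ :=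
  dslope (diskNormalization f z₀) 0 ∘ T (-z₀)

lemma diskNormalization_zero (f : ℂ → ℂ) (z₀ : ℂ) : diskNormalization f z₀ 0 = 0 := by
  simp only [diskNormalization, Function.comp_apply, T_zero, T_neg_self]

lemma T_neg_mul_hyperbolicDslope (f : ℂ → ℂ) {z₀ z : ℂ} (hz₀ : z₀ ∈ 𝔻) (hz : z ∈ 𝔻) :
    T (-z₀) z * hyperbolicDslope f z₀ z = T (-f z₀) (f z) := by
  have h := sub_smul_dslope (diskNormalization f z₀) 0 (T (-z₀) z)
  rw [diskNormalization_zero, sub_zero, sub_zero, smul_eq_mul] at h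
  rw [hyperbolicDslope, Function.comp_apply, h]
  simp only [diskNormalization, Function.comp_apply, T_T_neg hz₀ hz]

namespace Hclass

variable {f : ℂ → ℂ} {z₀ z : ℂ}

lemma hclass_diskNormalization (hf : Hclass f) (hz₀ : z₀ ∈ 𝔻) :
    Hclass (diskNormalization f z₀) := by
  have hγ := neg_mem_unitBall (hf.2 hz₀)
  have hmaps := hf.2.comp (mapsTo_T hz₀)
  exact ⟨(differentiableOn_T hγ).comp (hf.1.comp (differentiableOn_T hz₀) (mapsTo_T hz₀)) hmaps,
    (mapsTo_T hγ).comp hmaps⟩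

lemma deriv_diskNormalization_zero (hf : Hclass f) (hz₀ : z₀ ∈ 𝔻) :
    deriv (diskNormalization f z₀) 0 = H1 f z₀ := by
  have hfz₀ := hf.2 hz₀
  have hinner : HasDerivAt (T z₀) (1 - conj z₀ * z₀) 0 := by
    simpa using hasDerivAt_T (a := z₀) (z := 0) (by simp)
  have hmiddle : HasDerivAt f (deriv f z₀) z₀ := hf.1.hasDerivAt (isOpen_ball.mem_nhds hz₀)
  have houter : HasDerivAt (T (-f z₀)) (1 - conj (f z₀) * f z₀)⁻¹ (f z₀) := by
    refine (hasDerivAt_T (one_add_conj_mul_ne_zero (neg_mem_unitBall hfz₀) hfz₀)).congr_deriv ?_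
    have hne := one_sub_conj_mul_ne_zero hfz₀ hfz₀
    simp only [map_neg, neg_mul, mul_neg, neg_neg, ← sub_eq_add_neg]
    field_simp
  have hchain := houter.comp_of_eq 0
    (hmiddle.comp_of_eq 0 hinner (T_zero z₀).symm) (by simp [T_zero])
  rw [diskNormalization, hchain.deriv, H1, ofReal_one_sub_norm_sq, ofReal_one_sub_norm_sq]
  ring

lemma sclass_hyperbolicDslope (hf : Hclass f) (hz₀ : z₀ ∈ 𝔻) : Sclass (hyperbolicDslope f z₀) := by
  obtain ⟨hdiff, hmaps⟩ := hf.hclass_diskNormalization hz₀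
  have hT := mapsTo_T (neg_mem_unitBall hz₀)
  have hdslope : DifferentiableOn ℂ (dslope (diskNormalization f z₀) 0) 𝔻 :=
    (differentiableOn_dslope (ball_mem_nhds 0 one_pos)).mpr hdiff
  refine ⟨hdslope.comp (differentiableOn_T (neg_mem_unitBall hz₀)) hT, fun z hz ↦ ?_⟩
  rw [mem_closedBall_zero_iff, ← div_one (1 : ℝ)]
  refine norm_dslope_le_div_of_mapsTo_ball hdiff ?_ (hT hz)
  rw [diskNormalization_zero]
  exact hmaps.mono_right ball_subset_closedBall

lemma eq_T_hyperbolicDslope (hf : Hclass f) (hz₀ : z₀ ∈ 𝔻) (hz : z ∈ 𝔻) :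
    f z = T (f z₀) (T (-z₀) z * hyperbolicDslope f z₀ z) := by
  rw [T_neg_mul_hyperbolicDslope f hz₀ hz, T_T_neg (hf.2 hz₀) (hf.2 hz)]

lemma hyperbolicDslope_self (hf : Hclass f) (hz₀ : z₀ ∈ 𝔻) :
    hyperbolicDslope f z₀ z₀ = H1 f z₀ := by
  rw [hyperbolicDslope, Function.comp_apply, T_neg_self, dslope_same,
    hf.deriv_diskNormalization_zero hz₀]

lemma hclass_hyperbolicDslope (hf : Hclass f) (hz₀ : z₀ ∈ 𝔻) (hH1 : H1 f z₀ ∈ 𝔻) :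
    Hclass (hyperbolicDslope f z₀) := by
  obtain ⟨hdiff, hmaps⟩ := hf.sclass_hyperbolicDslope hz₀
  exact ⟨hdiff, mapsTo_ball_of_mapsTo_closedBall isOpen_ball (convex_ball 0 1).isPreconnected
    hdiff hmaps hz₀ (hf.hyperbolicDslope_self hz₀ ▸ hH1)⟩

lemma one_sub_conj_mul_mul_sub_eq (hf : Hclass f) (hz₀ : z₀ ∈ 𝔻) (hz : z ∈ 𝔻) :
    (1 - conj z₀ * z) * (f z - f z₀) =
      (z - z₀) * (hyperbolicDslope f z₀ z * (1 - conj (f z₀) * f z)) := by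
  rw [← T_neg_mul_one_sub_conj_mul hz₀ hz, ← T_neg_mul_one_sub_conj_mul (hf.2 hz₀) (hf.2 hz),
    ← T_neg_mul_hyperbolicDslope f hz₀ hz]
  ring

lemma mul_deriv_hyperbolicDslope_self (hf : Hclass f) (hz₀ : z₀ ∈ 𝔻) :
    2 * ((1 - conj (f z₀) * f z₀) * deriv (hyperbolicDslope f z₀) z₀) =
      (1 - conj z₀ * z₀) * iteratedDeriv 2 f z₀ - 2 * conj z₀ * deriv f z₀
        + 2 * conj (f z₀) * deriv f z₀ * H1 f z₀ := by
  have hnhds : 𝔻 ∈ 𝓝 z₀ := isOpen_ball.mem_nhds hz₀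
  have hΔ := (hf.sclass_hyperbolicDslope hz₀).1
  have hfC : ContDiffAt ℂ 2 f z₀ := (hf.1.analyticAt hnhds).contDiffAt
  have hΔC : ContDiffAt ℂ 2 (hyperbolicDslope f z₀) z₀ := (hΔ.analyticAt hnhds).contDiffAt
  have hderiv : HasDerivAt (fun z ↦ hyperbolicDslope f z₀ z * (1 - conj (f z₀) * f z))
      (deriv (hyperbolicDslope f z₀) z₀ * (1 - conj (f z₀) * f z₀)
        + hyperbolicDslope f z₀ z₀ * -(conj (f z₀) * deriv f z₀)) z₀ :=
    (hΔ.hasDerivAt hnhds).mul ((hf.1.hasDerivAt hnhds).const_mul _ |>.const_sub 1)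
  have hcompare := Filter.EventuallyEq.iteratedDeriv_eq 2 <|
    Filter.eventually_of_mem hnhds fun z hz ↦ hf.one_sub_conj_mul_mul_sub_eq hz₀ hz
  rw [iteratedDeriv_two_one_sub_mul_mul_sub _ hfC, iteratedDeriv_two_sub_mul (by fun_prop),
    hderiv.deriv, hf.hyperbolicDslope_self hz₀] at hcompare
  linear_combination -hcompare

lemma D2_eq_mul_deriv_hyperbolicDslope (hf : Hclass f) (hz₀ : z₀ ∈ 𝔻) :
    D2 f z₀ = 2 * ((1 - ‖z₀‖ ^ 2 : ℝ) * deriv (hyperbolicDslope f z₀) z₀) := by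
  have hderiv := hf.mul_deriv_hyperbolicDslope_self hz₀
  have hz₀ne := one_sub_conj_mul_ne_zero hz₀ hz₀
  have hfz₀ne := one_sub_conj_mul_ne_zero (hf.2 hz₀) (hf.2 hz₀)
  simp only [H1, D2, ofReal_one_sub_norm_sq] at hderiv ⊢
  field_simp at hderiv ⊢
  linear_combination -hderiv

lemma H1_hyperbolicDslope (hf : Hclass f) (hz₀ : z₀ ∈ 𝔻) :
    H1 (hyperbolicDslope f z₀) z₀ = H2 f z₀ := by
  rw [H1, H2, hf.D2_eq_mul_deriv_hyperbolicDslope hz₀, hf.hyperbolicDslope_self hz₀,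
    mul_div_mul_left _ _ two_ne_zero]

end Hclass

end

/-- Any `f ∈ ℋ` with `f(z₀) = γ₀`, `H¹f(z₀) = γ₁`, `H²f(z₀) = γ₂` (with `γ₁, γ₂ ∈ 𝔻`)
has the form `f(z) = T_{γ₀}(T_{-z₀}(z)·T_{γ₁}(T_{-z₀}(z)·T_{γ₂}(T_{-z₀}(z)·f*(z))))`
for some `f* ∈ 𝒮`. -/
theorem schwarz_pick_third_form (z₀ γ₀ γ₁ γ₂ : ℂ)
    (hz₀ : z₀ ∈ ball (0 : ℂ) 1) (hγ₀ : γ₀ ∈ ball (0 : ℂ) 1)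
    (hγ₁ : γ₁ ∈ ball (0 : ℂ) 1) (hγ₂ : γ₂ ∈ ball (0 : ℂ) 1)
    (f : ℂ → ℂ) (hf : Hclass f) (hfz₀ : f z₀ = γ₀)
    (hH1 : H1 f z₀ = γ₁) (hH2 : H2 f z₀ = γ₂) :
    ∃ fstar : ℂ → ℂ, Sclass fstar ∧
      ∀ z ∈ ball (0 : ℂ) 1,
        f z = T γ₀ (T (-z₀) z * T γ₁ (T (-z₀) z * T γ₂ (T (-z₀) z * fstar z))) := by
  subst hfz₀ hH1 hH2
  have hg₁ := hf.hclass_hyperbolicDslope hz₀ hγ₁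
  set g₁ := hyperbolicDslope f z₀
  have hg₁z₀ : g₁ z₀ = H1 f z₀ := hf.hyperbolicDslope_self hz₀
  have hH1g₁ : H1 g₁ z₀ = H2 f z₀ := hf.H1_hyperbolicDslope hz₀
  have hg₂ := hg₁.hclass_hyperbolicDslope hz₀ (hH1g₁ ▸ hγ₂)
  set g₂ := hyperbolicDslope g₁ z₀
  have hg₂z₀ : g₂ z₀ = H2 f z₀ := (hg₁.hyperbolicDslope_self hz₀).trans hH1g₁
  refine ⟨hyperbolicDslope g₂ z₀, hg₂.sclass_hyperbolicDslope hz₀, fun z hz ↦ ?_⟩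
  rw [← hg₂z₀, ← hg₂.eq_T_hyperbolicDslope hz₀ hz, ← hg₁z₀, ← hg₁.eq_T_hyperbolicDslope hz₀ hz,
    ← hf.eq_T_hyperbolicDslope hz₀ hz]
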